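/- arXiv:2203.15133 — 4 statements merged into one kernel-verified Lean document; each statement's English description precedes it below -/
import Mathlib

section
/- Let A be a henselian local ring with maximal ideal m and let f ∈ A[X] be monic. If the reduction of f modulo m factors as a product f̄ = g₀·h₀ of two coprime monic polynomials over the residue field, then f factors as f = g·h with g, h ∈ A[X] monic, g reducing to g₀ and h reducing to h₀ modulo m. -/
open Polynomial in
theorem etale_lift_aux {R S : Type*} [CommRing R] [HenselianLocalRing R] [CommRing S] [Algebra R S]
    [Algebra.Etale R S] (φ : S →ₐ[R] IsLocalRing.ResidueField R) :
    ∃ ψ : S →ₐ[R] R, (Algebra.ofId R (IsLocalRing.ResidueField R)).comp ψ = φ := by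
  have hQ : (RingHom.ker φ).IsPrime := RingHom.ker_isPrime _
  obtain ⟨s, hs, hst⟩ := Algebra.IsEtaleAt.exists_isStandardEtale (R := R) (RingHom.ker φ)
  obtain ⟨⟨P⟩⟩ := hst
  have hu : IsUnit (φ s) := by
    rw [isUnit_iff_ne_zero]; exact hs
  let φ' : Localization.Away s →ₐ[R] IsLocalRing.ResidueField R :=
    IsLocalization.Away.liftAlgHom (f := φ) s hu
  let χ : P.P.Ring →ₐ[R] IsLocalRing.ResidueField R := φ'.comp P.equivRing.symm.toAlgHom
  have hx := (StandardEtalePair.hasMap_X (P := P.P)).map χ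
  obtain ⟨a₀, ha₀⟩ := IsLocalRing.residue_surjective (χ P.P.X)
  rw [← ha₀] at hx
  have key : ∀ (p : R[X]) (x : R), aeval (IsLocalRing.residue R x) p
      = IsLocalRing.residue R (p.eval x) := fun p x => by
    rw [← IsLocalRing.ResidueField.algebraMap_eq, aeval_algebraMap_apply, coe_aeval_eq_eval]
  have h1 := hx.1
  have h2 := hx.isUnit_derivative_f
  have h3 := hx.2
  rw [key] at h1 h2 h3
  obtain ⟨a, ha, haa⟩ := HenselianLocalRing.is_henselian P.P.f P.P.monic_f a₀
    ((IsLocalRing.residue_eq_zero_iff _).mp h1) (isUnit_of_map_unit _ _ h2)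
  have haa' : IsLocalRing.residue R a = IsLocalRing.residue R a₀ := by
    rw [← sub_eq_zero, ← map_sub]; exact (IsLocalRing.residue_eq_zero_iff _).mpr haa
  have hm : P.P.HasMap a := by
    refine ⟨by simpa using ha, ?_⟩
    rw [coe_aeval_eq_eval]
    apply isUnit_of_map_unit (IsLocalRing.residue R)
    rw [← key, haa', key]; exact h3
  let ψ := P.P.lift a hm
  have hc : (Algebra.ofId R (IsLocalRing.ResidueField R)).comp ψ = χ := by
    apply StandardEtalePair.hom_ext
    rw [← ha₀, ← haa']
    simp only [AlgHom.comp_apply, ψ, StandardEtalePair.lift_X]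
    rfl
  refine ⟨(ψ.comp P.equivRing.toAlgHom).comp (IsScalarTower.toAlgHom R S _), ?_⟩
  ext x
  have := DFunLike.congr_fun hc (P.equivRing (algebraMap S _ x))
  refine this.trans ?_
  simp [χ, φ']

/-- Hensel's lemma for factorizations: over a henselian local ring, a coprime monic
factorization of the reduction of a monic polynomial lifts. -/
theorem stmt_1 {A : Type*} [CommRing A] [HenselianLocalRing A]
    (f : Polynomial A) (hf : f.Monic)
    (g₀ h₀ : Polynomial (IsLocalRing.ResidueField A))
    (hg₀ : g₀.Monic) (hh₀ : h₀.Monic) (hcop : IsCoprime g₀ h₀)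
    (hfac : f.map (IsLocalRing.residue A) = g₀ * h₀) :
    ∃ g h : Polynomial A, g.Monic ∧ h.Monic ∧ f = g * h ∧
      g.map (IsLocalRing.residue A) = g₀ ∧ h.map (IsLocalRing.residue A) = h₀ := by
  have hn : f.natDegree = g₀.natDegree + h₀.natDegree := by
    rw [← hg₀.natDegree_mul hh₀, ← hfac, hf.natDegree_map]
  let p := Polynomial.MonicDegreeEq.mk f hf rfl
  let e := Polynomial.UniversalCoprimeFactorizationRing.homEquiv (IsLocalRing.ResidueField A)
    g₀.natDegree h₀.natDegree hn p
  let q₁ := Polynomial.MonicDegreeEq.mk g₀ hg₀ rfl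
  let q₂ := Polynomial.MonicDegreeEq.mk h₀ hh₀ rfl
  obtain ⟨ψ, hψ⟩ := etale_lift_aux (e.symm ⟨(q₁, q₂), hfac.symm, hcop⟩)
  let r := Polynomial.UniversalCoprimeFactorizationRing.homEquiv A _ _ hn p ψ
  have h1 := Polynomial.UniversalCoprimeFactorizationRing.homEquiv_comp_fst _ _ _ hn p ψ
    (Algebra.ofId A (IsLocalRing.ResidueField A))
  have h2 := Polynomial.UniversalCoprimeFactorizationRing.homEquiv_comp_snd _ _ _ hn p ψ
    (Algebra.ofId A (IsLocalRing.ResidueField A))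
  rw [hψ] at h1 h2
  simp only [e, Equiv.apply_symm_apply] at h1 h2
  refine ⟨r.1.1.1, r.1.2.1, r.1.1.monic, r.1.2.monic, ?_, ?_, ?_⟩
  · rw [r.2.1]; simp [p]
  · exact congrArg Subtype.val h1.symm
  · exact congrArg Subtype.val h2.symm
end

section
/- Let A be a local ring with maximal ideal m, let p₁, …, p_r ∈ A[X] be monic polynomials that are pairwise coprime modulo m and each have unit constant term, and let b₁, …, b_r ∈ A be units. Then there exists a polynomial p ∈ A[X] with constant term 0 such that p ≡ bᵢ (mod pᵢ) for every i. -/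
lemma isCoprime_lift_aux {A : Type*} [CommRing A] [IsLocalRing A]
    (f g : Polynomial A) (hf : f.Monic)
    (h : IsCoprime (f.map (IsLocalRing.residue A)) (g.map (IsLocalRing.residue A))) :
    IsCoprime f g := by
  have hu : IsUnit (AdjoinRoot.mk f g) := by
    by_contra hn
    obtain ⟨M, hM, hgM⟩ := exists_max_ideal_of_mem_nonunits hn
    have := hf.finite_adjoinRoot
    have hmax : (M.comap (algebraMap A (AdjoinRoot f))).IsMaximal :=
      Ideal.isMaximal_comap_of_isIntegral_of_isMaximal M
    have hm := IsLocalRing.eq_maximalIdeal hmax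
    obtain ⟨u', v', huv⟩ := h
    obtain ⟨u, rfl⟩ := Polynomial.map_surjective _ IsLocalRing.residue_surjective u'
    obtain ⟨v, rfl⟩ := Polynomial.map_surjective _ IsLocalRing.residue_surjective v'
    have h0 : (u * f + v * g - 1).map (IsLocalRing.residue A) = 0 := by
      simp [huv]
    have h1 : u * f + v * g - 1 ∈ Ideal.map Polynomial.C (IsLocalRing.maximalIdeal A) := by
      rw [Ideal.mem_map_C_iff]
      intro n
      rw [← IsLocalRing.residue_eq_zero_iff, ← Polynomial.coeff_map, h0, Polynomial.coeff_zero]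
    have hle : Ideal.map Polynomial.C (IsLocalRing.maximalIdeal A) ≤
        M.comap (AdjoinRoot.mk f) := by
      rw [Ideal.map_le_iff_le_comap, ← hm]
      intro x hx
      exact hx
    have h2 := hle h1
    rw [Ideal.mem_comap] at h2
    simp only [map_sub, map_add, map_mul, AdjoinRoot.mk_self, mul_zero, zero_add, map_one] at h2
    apply hM.ne_top
    rw [Ideal.eq_top_iff_one]
    have := M.sub_mem (M.mul_mem_left (AdjoinRoot.mk f v) hgM) h2
    simpa using this
  obtain ⟨w, hw⟩ := hu.exists_left_inv
  obtain ⟨v, rfl⟩ := AdjoinRoot.mk_surjective w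
  have : AdjoinRoot.mk f (1 - v * g) = 0 := by simp [hw]
  rw [AdjoinRoot.mk_eq_zero] at this
  obtain ⟨u, hu⟩ := this
  exact ⟨u, v, by linear_combination -hu⟩

/-- Given monic polynomials `pᵢ` over a local ring, pairwise coprime modulo the maximal
ideal, each with unit constant term, and units `bᵢ`, there is a polynomial `q` with zero
constant term such that `q ≡ bᵢ (mod pᵢ)` for all `i`. -/
theorem stmt_5 {A : Type*} [CommRing A] [IsLocalRing A] {r : ℕ}
    (p : Fin r → Polynomial A) (hmonic : ∀ i, (p i).Monic)
    (hcop : ∀ i j, i ≠ j →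
      IsCoprime ((p i).map (IsLocalRing.residue A)) ((p j).map (IsLocalRing.residue A)))
    (hconst : ∀ i, IsUnit ((p i).coeff 0))
    (b : Fin r → A) (hb : ∀ i, IsUnit (b i)) :
    ∃ q : Polynomial A, q.coeff 0 = 0 ∧ ∀ i, p i ∣ (q - Polynomial.C (b i)) := by
  obtain ⟨q, hq⟩ := Ideal.exists_forall_sub_mem_ideal
    (I := fun i => Ideal.span {p i})
    (fun i j hij => (Ideal.isCoprime_span_singleton_iff _ _).2
      (isCoprime_lift_aux _ _ (hmonic i) (hcop i j hij)))
    (fun i => Polynomial.C (b i))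
  have hP : IsUnit ((∏ i, p i).coeff 0) := by
    rw [Polynomial.coeff_zero_prod]
    exact (IsUnit.prod_univ_iff).2 hconst
  obtain ⟨c, hc⟩ := hP.exists_left_inv
  refine ⟨q - Polynomial.C (q.coeff 0 * c) * ∏ i, p i, ?_, fun i => ?_⟩
  · rw [Polynomial.coeff_sub, Polynomial.coeff_C_mul, mul_assoc, hc, mul_one, sub_self]
  · have h1 := Ideal.mem_span_singleton.1 (hq i)
    have h2 : p i ∣ Polynomial.C (q.coeff 0 * c) * ∏ i, p i :=
      (Finset.dvd_prod_of_mem p (Finset.mem_univ i)).mul_left _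
    have := dvd_sub h1 h2
    rwa [sub_right_comm] at this
end

section
/- Let (R, m_R) → (S, m_S) be a local homomorphism of noetherian local rings with R regular and S Cohen–Macaulay. If dim S = dim R + dim(S/m_R S), then S is flat over R. -/
/-- A noetherian local ring is regular if its maximal ideal can be generated by
`dim R` elements. -/
def IsRegularLocalRing' (R : Type*) [CommRing R] [IsLocalRing R] : Prop :=
  IsNoetherianRing R ∧
    ∃ s : Finset R, Ideal.span (s : Set R) = IsLocalRing.maximalIdeal R ∧
      (s.card : WithBot (WithTop ℕ)) = ringKrullDim R

/-- A noetherian local ring is Cohen–Macaulay if there is a regular sequence of length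
`dim S` contained in the maximal ideal. -/
def IsCohenMacaulayLocalRing' (S : Type*) [CommRing S] [IsLocalRing S] : Prop :=
  IsNoetherianRing S ∧
    ∃ rs : List S, (∀ r ∈ rs, r ∈ IsLocalRing.maximalIdeal S) ∧
      RingTheory.Sequence.IsRegular S rs ∧
      (rs.length : WithBot (WithTop ℕ)) = ringKrullDim S

open Module RingTheory.Sequence IsLocalRing CategoryTheory Abelian Limits Pointwise

/-- Relations among the images of `f i` with coefficients in `S`. -/
def relS {R : Type*} (S : Type*) [CommRing R] [CommRing S] [Algebra R S] {ι : Type} [Fintype ι]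
    (f : ι → R) : Submodule S (ι → S) where
  carrier := {s | ∑ i, algebraMap R S (f i) * s i = 0}
  add_mem' := by
    intro a b ha hb
    simp only [Set.mem_ofPred_eq, Pi.add_apply, mul_add, Finset.sum_add_distrib] at *
    rw [ha, hb, add_zero]
  zero_mem' := by simp
  smul_mem' := by
    intro c a ha
    simp only [Set.mem_ofPred_eq, Pi.smul_apply, smul_eq_mul] at *
    rw [← mul_zero c, ← ha, Finset.mul_sum]
    exact Finset.sum_congr rfl fun i _ => by ring

/-- The `S`-span of relations with coefficients in `R`. -/
def relT {R : Type*} (S : Type*) [CommRing R] [CommRing S] [Algebra R S] {ι : Type} [Fintype ι]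
    (f : ι → R) : Submodule S (ι → S) :=
  Submodule.span S ((fun (a : ι → R) i => algebraMap R S (a i)) '' {a | ∑ i, f i * a i = 0})

lemma relS_le_relT {R S R' S' : Type*} [CommRing R] [CommRing S] [CommRing R'] [CommRing S']
    [Algebra R S] [Algebra R' S'] [IsNoetherianRing R] [IsNoetherianRing S] [IsLocalRing S]
    (x : R) (hx : algebraMap R S x ∈ IsLocalRing.maximalIdeal S)
    (hreg : ∀ s : S, algebraMap R S x * s = 0 → s = 0)
    (π : R →+* R') (ρ : S →+* S') (hπ : Function.Surjective π) (hρ : Function.Surjective ρ)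
    (hπx : ∀ r, π r = 0 → ∃ c, r = x * c)
    (hρx : ∀ s, ρ s = 0 → ∃ t, s = algebraMap R S x * t)
    (hcomp : ∀ r, ρ (algebraMap R S r) = algebraMap R' S' (π r))
    (hflat : Module.Flat R' S') (I : Ideal R) :
    ∀ (ι : Type) [Fintype ι] (f : ι → R), Ideal.span (Set.range f) = I → relS S f ≤ relT S f := by
  induction I using WellFoundedGT.induction with
  | ind I ih =>
  intro ι _ f hf
  set φ := algebraMap R S with hφ
  apply Submodule.le_of_le_smul_of_le_jacobson_bot (I := Ideal.span {φ x})
    (IsNoetherian.noetherian _)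
  · rw [Ideal.span_singleton_le_iff_mem, IsLocalRing.jacobson_eq_maximalIdeal _ bot_ne_top]
    exact hx
  intro s hs
  have hs0 : ∑ i, φ (f i) * s i = 0 := hs
  obtain ⟨k, a', y', ha1, ha2⟩ := Module.Flat.isTrivialRelation_of_sum_smul_eq_zero
    (R := R') (M := S') (f := fun i => π (f i)) (x := fun i => ρ (s i)) (by
      simp only [Algebra.smul_def, ← hcomp, ← map_mul, ← map_sum]
      rw [hs0, map_zero])
  choose a ha using fun i j => hπ (a' i j)
  choose y hy using fun j => hρ (y' j)
  have h2 : ∀ i, ∃ t, s i - ∑ j, φ (a i j) * y j = φ x * t := by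
    intro i
    apply hρx
    simp only [map_sub, map_sum, map_mul, hcomp, ha, hy, ha1, Algebra.smul_def, sub_self]
  choose t ht using h2
  have h3 : ∀ j, ∃ c, ∑ i, f i * a i j = x * c := by
    intro j
    apply hπx
    simp only [map_sum, map_mul, ha]
    simpa using ha2 j
  choose c hc using h3
  have hs' : ∀ i, s i = ∑ j, φ (a i j) * y j + φ x * t i := fun i => by rw [← ht]; ring
  have h4 : ∑ j, φ (c j) * y j + ∑ i, φ (f i) * t i = 0 := by
    apply hreg
    rw [← hs0]
    simp only [hs', mul_add, Finset.sum_add_distrib, Finset.mul_sum]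
    congr 1
    · rw [Finset.sum_comm]
      refine Finset.sum_congr rfl fun j _ => ?_
      rw [← mul_assoc, ← map_mul, ← hc, map_sum, Finset.sum_mul]
      simp [mul_assoc]
    · exact Finset.sum_congr rfl fun i _ => by ring
  by_cases hI : ∀ j, c j ∈ I
  · have h5 : ∀ j, ∃ b : ι → R, ∑ i, b i * f i = c j := by
      intro j
      have := hI j
      rw [← hf] at this
      exact Ideal.mem_span_range_iff_exists_fun.mp this
    choose b hb using h5
    have e : s = (∑ j, y j • fun i => φ (a i j - x * b j i)) +
        φ x • (fun i => t i + ∑ j, φ (b j i) * y j) := by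
      funext i
      simp only [hs', Pi.add_apply, Finset.sum_apply, Pi.smul_apply, smul_eq_mul, map_sub, map_mul,
        mul_sub, mul_add, Finset.sum_sub_distrib, Finset.mul_sum]
      have e1 : ∑ j, y j * (φ x * φ (b j i)) = ∑ j, φ x * (φ (b j i) * y j) :=
        Finset.sum_congr rfl fun j _ => by ring
      have e2 : ∑ j, y j * φ (a i j) = ∑ j, φ (a i j) * y j :=
        Finset.sum_congr rfl fun j _ => by ring
      rw [e1, e2]; ring
    rw [e]
    refine Submodule.add_mem_sup ?_ ?_
    · refine Submodule.sum_mem _ fun j _ => Submodule.smul_mem _ _ (Submodule.subset_span ?_)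
      refine ⟨fun i => a i j - x * b j i, ?_, rfl⟩
      simp only [Set.mem_ofPred_eq, mul_sub, Finset.sum_sub_distrib, hc, ← hb, Finset.mul_sum]
      rw [sub_eq_zero]
      exact Finset.sum_congr rfl fun j _ => by ring
    · refine Submodule.smul_mem_smul (Ideal.mem_span_singleton_self _) ?_
      change ∑ i, φ (f i) * (t i + ∑ j, φ (b j i) * y j) = 0
      rw [← h4]
      simp only [mul_add, Finset.sum_add_distrib, Finset.mul_sum, ← hb, map_sum, map_mul,
        Finset.sum_mul]
      rw [add_comm, Finset.sum_comm]
      congr 1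
      exact Finset.sum_congr rfl fun j _ => Finset.sum_congr rfl fun i _ => by ring
  · refine Submodule.mem_sup_left ?_
    have hlt : I < Ideal.span (Set.range (Sum.elim f c)) := by
      push Not at hI
      obtain ⟨j, hj⟩ := hI
      refine lt_of_le_of_ne ?_ ?_
      · rw [← hf]
        apply Ideal.span_mono
        rw [Set.Sum.elim_range]
        exact Set.subset_union_left
      · intro h
        apply hj
        rw [h]
        exact Ideal.subset_span ⟨Sum.inr j, rfl⟩
    have h0 : Sum.elim t y ∈ relS S (Sum.elim f c) := by
      change ∑ i, φ (Sum.elim f c i) * Sum.elim t y i = 0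
      rw [Fintype.sum_sum_type]
      simpa [add_comm] using h4
    have h6 := ih _ hlt _ (Sum.elim f c) rfl h0
    rw [relT, Submodule.mem_span_set'] at h6
    obtain ⟨n, z, g, hg⟩ := h6
    choose γ hγ1 hγ2 using fun k => (g k).2
    have ht' : ∀ i, t i = ∑ k, z k * φ (γ k (Sum.inl i)) := by
      intro i
      have := congrFun hg (Sum.inl i)
      simp only [← hγ2, Finset.sum_apply, Pi.smul_apply, smul_eq_mul, Sum.elim_inl] at this
      exact this.symm
    have hy' : ∀ j, y j = ∑ k, z k * φ (γ k (Sum.inr j)) := by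
      intro i
      have := congrFun hg (Sum.inr i)
      simp only [← hγ2, Finset.sum_apply, Pi.smul_apply, smul_eq_mul, Sum.elim_inr] at this
      exact this.symm
    have e : s = ∑ k, z k • fun i => φ (∑ j, a i j * γ k (Sum.inr j) + x * γ k (Sum.inl i)) := by
      funext i
      simp only [hs', ht', hy', Finset.sum_apply, Pi.smul_apply, smul_eq_mul, map_add, map_sum,
        map_mul, mul_add, Finset.sum_add_distrib, Finset.mul_sum]
      rw [Finset.sum_comm]
      congr 1
      · exact Finset.sum_congr rfl fun j _ => Finset.sum_congr rfl fun i _ => by ring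
      · exact Finset.sum_congr rfl fun j _ => by ring
    rw [e]
    refine Submodule.sum_mem _ fun k _ => Submodule.smul_mem _ _ (Submodule.subset_span ?_)
    refine ⟨fun i => ∑ j, a i j * γ k (Sum.inr j) + x * γ k (Sum.inl i), ?_, rfl⟩
    have h7 : ∑ i, (Sum.elim f c) i * γ k i = 0 := hγ1 k
    rw [Fintype.sum_sum_type] at h7
    simp only [Sum.elim_inl, Sum.elim_inr] at h7
    simp only [Set.mem_ofPred_eq]
    rw [← mul_zero x, ← h7]
    simp only [mul_add, Finset.sum_add_distrib, Finset.mul_sum]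
    rw [add_comm, Finset.sum_comm]
    congr 1
    · exact Finset.sum_congr rfl fun j _ => by ring
    · refine Finset.sum_congr rfl fun j _ => ?_
      rw [← mul_assoc, ← hc, Finset.sum_mul]
      exact Finset.sum_congr rfl fun j _ => by ring

lemma flat_of_quot {R S R' S' : Type*} [CommRing R] [CommRing S] [CommRing R'] [CommRing S']
    [Algebra R S] [Algebra R' S'] [IsNoetherianRing R] [IsNoetherianRing S] [IsLocalRing S]
    (x : R) (hx : algebraMap R S x ∈ IsLocalRing.maximalIdeal S)
    (hreg : ∀ s : S, algebraMap R S x * s = 0 → s = 0)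
    (π : R →+* R') (ρ : S →+* S') (hπ : Function.Surjective π) (hρ : Function.Surjective ρ)
    (hπx : ∀ r, π r = 0 → ∃ c, r = x * c)
    (hρx : ∀ s, ρ s = 0 → ∃ t, s = algebraMap R S x * t)
    (hcomp : ∀ r, ρ (algebraMap R S r) = algebraMap R' S' (π r))
    (hflat : Module.Flat R' S') : Module.Flat R S := by
  apply Module.Flat.of_forall_isTrivialRelation
  intro l f s hs
  have h0 : s ∈ relS S f := by
    change ∑ i, algebraMap R S (f i) * s i = 0
    simpa only [Algebra.smul_def] using hs
  have h := relS_le_relT x hx hreg π ρ hπ hρ hπx hρx hcomp hflat _ (Fin l) f rfl h0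
  rw [relT, Submodule.mem_span_set'] at h
  obtain ⟨n, z, g, hg⟩ := h
  choose γ hγ1 hγ2 using fun k => (g k).2
  refine ⟨n, fun i k => γ k i, z, fun i => ?_, fun k => ?_⟩
  · rw [← hg]
    simp only [← hγ2, Finset.sum_apply, Algebra.smul_def]
    exact Finset.sum_congr rfl fun j _ => mul_comm _ _
  · simpa using hγ1 k

lemma length_le_dim_quot {S : Type*} [CommRing S] [IsLocalRing S] [IsNoetherianRing S]
    (rs : List S) : ∀ (M : Type _) [AddCommGroup M] [Module S M] [Module.Finite S M]
    (_ : ∀ r ∈ rs, r ∈ maximalIdeal S) (_ : IsWeaklyRegular M rs)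
    (p : Ideal S) (_ : p.IsPrime) (n : M) (_ : n ≠ 0) (_ : ∀ a ∈ p, a • n = 0),
    (rs.length : WithBot ℕ∞) ≤ ringKrullDim (S ⧸ p) := by
  induction rs with
  | nil =>
    intro M _ _ _ _ _ p hp n _ _
    simpa using ringKrullDim_nonneg_of_nontrivial
  | cons y ys ih =>
    intro M _ _ _ hmem hreg p hp n hn hpn
    rw [isWeaklyRegular_cons_iff] at hreg
    obtain ⟨hy, hys⟩ := hreg
    have hyp : y ∉ p := fun h => hn (hy (by simpa using hpn y h))
    let N : Submodule S M :=
      { carrier := {m | ∀ a ∈ p, a • m = 0}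
        add_mem' := fun {a b} ha hb c hc => by rw [smul_add, ha c hc, hb c hc, add_zero]
        zero_mem' := fun c _ => smul_zero c
        smul_mem' := fun c m hm a ha => by rw [smul_comm, hm a ha, smul_zero] }
    have hN : ¬ (N ≤ y • (⊤ : Submodule S M)) := by
      intro hle
      have : N = ⊥ := by
        apply Submodule.eq_bot_of_le_smul_of_le_jacobson_bot (Ideal.span {y}) _
          (IsNoetherian.noetherian _)
        · rw [Submodule.ideal_span_singleton_smul]
          intro m hm
          obtain ⟨m', _, rfl⟩ := (Submodule.mem_smul_pointwise_iff_exists _ _ _).mp (hle hm)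
          refine Submodule.smul_mem_pointwise_smul _ _ _ fun a ha => hy ?_
          have := hm a ha
          simp only [smul_zero]
          rw [smul_comm]
          exact this
        · rw [Ideal.span_singleton_le_iff_mem, jacobson_eq_maximalIdeal _ bot_ne_top]
          exact hmem y (by simp)
      exact hn ((Submodule.eq_bot_iff _).mp this n hpn)
    obtain ⟨m, hm, hmy⟩ := SetLike.not_le_iff_exists.mp hN
    have hm0 : (Submodule.Quotient.mk m : QuotSMulTop y M) ≠ 0 := by
      rwa [Ne, Submodule.Quotient.mk_eq_zero]
    obtain ⟨q, hq, hqle⟩ := exists_le_isAssociatedPrime_of_isNoetherianRing S _ hm0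
    rw [isAssociatedPrime_iff] at hq
    obtain ⟨hqp, z, hz⟩ := hq
    have hmq : ∀ a : S, a • m ∈ y • (⊤ : Submodule S M) → a ∈ q := by
      intro a ha
      apply hqle
      rw [Submodule.mem_colon_singleton, Submodule.mem_bot, ← Submodule.Quotient.mk_smul,
        Submodule.Quotient.mk_eq_zero]
      exact ha
    have hpq : p ≤ q := fun a ha => hmq a (by rw [hm a ha]; exact zero_mem _)
    have hyq : y ∈ q := hmq y (Submodule.smul_mem_pointwise_smul _ _ _ trivial)
    have hz0 : z ≠ 0 := by
      rintro rfl
      apply hqp.ne_top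
      rw [hz, Ideal.eq_top_iff_one, Submodule.mem_colon_singleton, smul_zero]
      exact zero_mem _
    have h1 := ih (QuotSMulTop y M) (fun r hr => hmem r (by simp [hr])) hys q hqp z hz0
      (fun a ha => by rwa [hz, Submodule.mem_colon_singleton, Submodule.mem_bot] at ha)
    have h2 : ringKrullDim (S ⧸ q) + 1 ≤ ringKrullDim (S ⧸ p) :=
      ringKrullDim_succ_le_of_surjective (Ideal.Quotient.factor hpq)
        (Ideal.Quotient.factor_surjective hpq) (r := Ideal.Quotient.mk p y)
        (mem_nonZeroDivisors_of_ne_zero (by rwa [Ne, Ideal.Quotient.eq_zero_iff_mem]))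
        (by rw [Ideal.Quotient.factor_mk, Ideal.Quotient.eq_zero_iff_mem]; exact hyq)
    refine le_trans ?_ h2
    push_cast [List.length_cons]
    gcongr

universe u

lemma exists_regular_quot {S : Type u} [CommRing S] [IsLocalRing S] [IsNoetherianRing S]
    (M : Type u) [AddCommGroup M] [Module S M] [Module.Finite S M] [Nontrivial M]
    (rs : List S) (hmem : ∀ r ∈ rs, r ∈ maximalIdeal S) (hreg : IsWeaklyRegular M rs)
    (n : ℕ) (hn : rs.length = n + 1) (x : S) (hx : x ∈ maximalIdeal S) (hxr : IsSMulRegular M x) :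
    ∃ rs' : List S, rs'.length = n ∧ (∀ r ∈ rs', r ∈ maximalIdeal S) ∧
      IsWeaklyRegular (QuotSMulTop x M) rs' := by
  have hlt : ∀ (L : Type u) [AddCommGroup L] [Module S L] [Module.Finite S L] [Nontrivial L],
      maximalIdeal S • (⊤ : Submodule S L) < ⊤ := fun L _ _ _ _ =>
    (Submodule.top_ne_ideal_smul_of_le_jacobson_annihilator
      (maximalIdeal_le_jacobson _)).symm.lt_top
  let N : ModuleCat.{u} S := ModuleCat.of S (S ⧸ maximalIdeal S)
  have : Module.Finite S N := inferInstanceAs (Module.Finite S (S ⧸ maximalIdeal S))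
  have hsupp : Module.support S N = PrimeSpectrum.zeroLocus (maximalIdeal S) := by
    change Module.support S (S ⧸ maximalIdeal S) = _
    rw [Module.support_eq_zeroLocus, Ideal.annihilator_quotient]
  have hext := ModuleCat.subsingleton_ext_of_exists_isRegular (maximalIdeal S) N hsupp.subset
    (ModuleCat.of S M) (hlt M) rs hmem
    (IsRegular.of_isWeaklyRegular_of_mem_maximalIdeal _ hmem hreg)
  have : Nontrivial (QuotSMulTop x M) := nontrivial_quotSMulTop_of_mem_maximalIdeal _ hx
  obtain ⟨rs', h1, h2, h3⟩ := ModuleCat.exists_isRegular_of_exists_subsingleton_ext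
    (maximalIdeal S) n (ModuleCat.of S (QuotSMulTop x M)) (hlt _) N hsupp (by
      intro i hi
      have zero1 := AddCommGrpCat.isZero_of_iff_subsingleton.mpr (hext i (by omega))
      have zero2 := AddCommGrpCat.isZero_of_iff_subsingleton.mpr (hext (i + 1) (by omega))
      have hxr' : IsSMulRegular (ModuleCat.of S M) x := hxr
      exact AddCommGrpCat.subsingleton_of_isZero <| ShortComplex.Exact.isZero_of_both_zeros
        ((Ext.covariant_sequence_exact₃' N hxr'.smulShortComplex_shortExact) i (i + 1) rfl)
        (zero1.eq_zero_of_src _) (zero2.eq_zero_of_tgt _))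
  exact ⟨rs', h1, h2, h3.toIsWeaklyRegular⟩

lemma supportDim_le_ofList {S : Type u} [CommRing S] [IsLocalRing S] [IsNoetherianRing S]
    (xs : List S) : ∀ (M : Type u) [AddCommGroup M] [Module S M] [Module.Finite S M]
    (_ : ∀ r ∈ xs, r ∈ maximalIdeal S),
    supportDim S M ≤ supportDim S (M ⧸ Ideal.ofList xs • (⊤ : Submodule S M)) + xs.length := by
  induction xs with
  | nil =>
    intro M _ _ _ _
    rw [Ideal.ofList_nil, Submodule.bot_smul]
    simpa using (supportDim_eq_of_equiv (Submodule.quotEquivOfEqBot ⊥ rfl).symm).le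
  | cons x xs ih =>
    intro M _ _ _ hmem
    rw [supportDim_eq_of_equiv (Submodule.quotOfListConsSMulTopEquivQuotSMulTopInner M x xs)]
    have h1 := ih (QuotSMulTop x M) (fun r hr => hmem r (by simp [hr]))
    have h2 := supportDim_le_supportDim_quotSMulTop_succ (M := M) (hmem x (by simp))
    refine h2.trans ?_
    push_cast [List.length_cons]
    rw [← add_assoc]
    gcongr

lemma isWeaklyRegular_of_dim {S : Type u} [CommRing S] [IsLocalRing S] [IsNoetherianRing S]
    (xs : List S) : ∀ (M : Type u) [AddCommGroup M] [Module S M] [Module.Finite S M] [Nontrivial M]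
    (_ : ∀ r ∈ xs, r ∈ maximalIdeal S)
    (rs : List S) (_ : ∀ r ∈ rs, r ∈ maximalIdeal S) (_ : IsWeaklyRegular M rs)
    (_ : supportDim S M = rs.length)
    (_ : supportDim S (M ⧸ Ideal.ofList xs • (⊤ : Submodule S M)) + xs.length ≤ supportDim S M),
    IsWeaklyRegular M xs := by
  induction xs with
  | nil => intros; exact IsWeaklyRegular.nil _ _
  | cons x xs ih =>
    intro M _ _ _ _ hxs rs hrs hreg hdim hle
    have hx : x ∈ maximalIdeal S := hxs x (by simp)
    have hxs' : ∀ r ∈ xs, r ∈ maximalIdeal S := fun r hr => hxs r (by simp [hr])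
    have : Nontrivial (QuotSMulTop x M) := nontrivial_quotSMulTop_of_mem_maximalIdeal _ hx
    rw [supportDim_eq_of_equiv (Submodule.quotOfListConsSMulTopEquivQuotSMulTopInner M x xs)] at hle
    push_cast [List.length_cons] at hle
    rw [← add_assoc] at hle
    have h1 := supportDim_le_ofList xs (QuotSMulTop x M) hxs'
    have h2 : supportDim S (QuotSMulTop x M) + 1 ≤ supportDim S M := by
      refine le_trans ?_ hle
      gcongr
    have hxr : IsSMulRegular M x := by
      by_contra hnot
      have hx' : x ∈ ⋃ p ∈ associatedPrimes S M, (p : Set S) := by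
        rw [biUnion_associatedPrimes_eq_compl_regular]
        exact hnot
      simp only [Set.mem_iUnion] at hx'
      obtain ⟨p, hp, hxp⟩ := hx'
      rw [AssociatedPrimes.mem_iff, isAssociatedPrime_iff] at hp
      obtain ⟨hpp, n, hn⟩ := hp
      have hn0 : n ≠ 0 := by
        rintro rfl
        apply hpp.ne_top
        rw [hn, Ideal.eq_top_iff_one, Submodule.mem_colon_singleton, smul_zero]
        exact zero_mem _
      have h3 := length_le_dim_quot rs M hrs hreg p hpp n hn0
        (fun a ha => by rwa [hn, Submodule.mem_colon_singleton, Submodule.mem_bot] at ha)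
      have h4 : (⟨p, hpp⟩ : PrimeSpectrum S) ∈ Module.support S (QuotSMulTop x M) := by
        rw [support_quotSMulTop]
        refine ⟨?_, by simpa using hxp⟩
        rw [support_eq_zeroLocus]
        intro a ha
        change a ∈ p
        rw [hn, Submodule.mem_colon_singleton, Submodule.mem_bot]
        exact mem_annihilator.mp ha n
      rw [support_eq_zeroLocus] at h4
      have h5 : ringKrullDim (S ⧸ p) ≤ supportDim S (QuotSMulTop x M) := by
        rw [supportDim_eq_ringKrullDim_quotient_annihilator]
        exact ringKrullDim_le_of_surjective (Ideal.Quotient.factor h4)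
          (Ideal.Quotient.factor_surjective h4)
      have h6 : (rs.length : WithBot ℕ∞) + 1 ≤ rs.length := by
        rw [← hdim] at h3 ⊢
        refine le_trans ?_ h2
        gcongr
        exact h3.trans h5
      have h7 : rs.length + 1 ≤ rs.length := by exact_mod_cast h6
      omega
    have hq := supportDim_quotSMulTop_succ_eq_supportDim hxr hx
    have hb : supportDim S (QuotSMulTop x M) ≠ ⊥ := supportDim_ne_bot_of_nontrivial _ _
    obtain ⟨n, hn, hn'⟩ : ∃ n : ℕ, rs.length = n + 1 ∧ supportDim S (QuotSMulTop x M) = n := by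
      rw [hdim] at hq
      generalize supportDim S (QuotSMulTop x M) = d at hq hb
      induction d with
      | bot => exact absurd rfl hb
      | coe d =>
        induction d with
        | top => exact absurd hq (by intro h; cases h)
        | coe d => exact ⟨d, by exact_mod_cast hq.symm, rfl⟩
    obtain ⟨rs', hl, hm, hr⟩ := exists_regular_quot M rs hrs hreg n hn x hx hxr
    refine IsWeaklyRegular.cons hxr (ih (QuotSMulTop x M) hxs' rs' hm hr (by rw [hn', hl]) ?_)
    rw [← hq] at hle
    exact ENat.WithBot.add_le_add_one_right_iff.mp hle

universe v

lemma flat_of_isWeaklyRegular (n : ℕ) : ∀ {R : Type u} {S : Type v} [CommRing R] [CommRing S]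
    [IsLocalRing R] [IsLocalRing S]
    [Algebra R S] [IsLocalHom (algebraMap R S)] [IsNoetherianRing R] [IsNoetherianRing S]
    (xs : List R) (_ : xs.length = n) (_ : Ideal.ofList xs = maximalIdeal R)
    (_ : IsWeaklyRegular S (xs.map (algebraMap R S))), Module.Flat R S := by
  induction n with
  | zero =>
    intro R S _ _ _ _ _ _ _ _ xs hl hm _
    rw [List.length_eq_zero_iff] at hl
    subst hl
    rw [Ideal.ofList_nil] at hm
    have hF : IsField R := isField_iff_maximalIdeal_eq.mpr hm.symm
    let := hF.toField
    infer_instance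
  | succ n ih =>
    intro R S _ _ _ _ _ _ _ _ xs hl hm hreg
    obtain ⟨x, xs, rfl⟩ : ∃ x ys, xs = x :: ys := by
      cases xs with
      | nil => simp at hl
      | cons x ys => exact ⟨x, ys, rfl⟩
    have hx : x ∈ maximalIdeal R := by
      rw [← hm]; exact Ideal.subset_span (by simp)
    set φ := algebraMap R S with hφ
    have hloc : Ideal.map φ (maximalIdeal R) ≤ maximalIdeal S :=
      ((local_hom_TFAE φ).out 0 2).mp ‹_›
    have hφx : φ x ∈ maximalIdeal S := hloc (Ideal.mem_map_of_mem _ hx)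
    rw [List.map_cons, isWeaklyRegular_cons_iff'] at hreg
    obtain ⟨hx0, hreg⟩ := hreg
    have hle : Ideal.span {x} ≤ (Ideal.span {φ x}).comap φ := by
      rw [Ideal.span_singleton_le_iff_mem]
      exact Ideal.mem_span_singleton_self _
    have hneR : Ideal.span {x} ≠ ⊤ := fun h => (mem_maximalIdeal x).mp hx (Ideal.span_singleton_eq_top.mp h)
    have hneS : Ideal.span {φ x} ≠ ⊤ :=
      fun h => (mem_maximalIdeal _).mp hφx (Ideal.span_singleton_eq_top.mp h)
    have : Nontrivial (R ⧸ Ideal.span {x}) := Ideal.Quotient.nontrivial_iff.mpr hneR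
    have : Nontrivial (S ⧸ Ideal.span {φ x}) := Ideal.Quotient.nontrivial_iff.mpr hneS
    have : IsLocalRing (R ⧸ Ideal.span {x}) :=
      IsLocalRing.of_surjective' (Ideal.Quotient.mk _) Ideal.Quotient.mk_surjective
    have : IsLocalRing (S ⧸ Ideal.span {φ x}) :=
      IsLocalRing.of_surjective' (Ideal.Quotient.mk _) Ideal.Quotient.mk_surjective
    let : Algebra (R ⧸ Ideal.span {x}) (S ⧸ Ideal.span {φ x}) :=
      (Ideal.quotientMap (Ideal.span {φ x}) φ hle).toAlgebra
    have hcomp : ∀ r, Ideal.Quotient.mk (Ideal.span {φ x}) (φ r) =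
        algebraMap (R ⧸ Ideal.span {x}) (S ⧸ Ideal.span {φ x}) (Ideal.Quotient.mk _ r) :=
      fun r => (Ideal.quotientMap_mk (H := hle)).symm
    have : IsLocalHom (algebraMap (R ⧸ Ideal.span {x}) (S ⧸ Ideal.span {φ x})) := by
      constructor
      intro a ha
      obtain ⟨r, rfl⟩ := Ideal.Quotient.mk_surjective a
      rw [← hcomp] at ha
      have h1 : IsLocalHom (Ideal.Quotient.mk (Ideal.span {φ x})) :=
        IsLocalHom.of_surjective _ Ideal.Quotient.mk_surjective
      exact (isUnit_of_map_unit φ _ (isUnit_of_map_unit _ _ ha)).map _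
    refine flat_of_quot (R' := R ⧸ Ideal.span {x}) (S' := S ⧸ Ideal.span {φ x}) x hφx ?_
      (Ideal.Quotient.mk _) (Ideal.Quotient.mk _) Ideal.Quotient.mk_surjective
      Ideal.Quotient.mk_surjective ?_ ?_ hcomp ?_
    · intro s hs
      exact hx0 (by simpa using hs)
    · intro r hr
      rw [Ideal.Quotient.eq_zero_iff_mem, Ideal.mem_span_singleton] at hr
      exact hr
    · intro r hr
      rw [Ideal.Quotient.eq_zero_iff_mem, Ideal.mem_span_singleton] at hr
      exact hr
    · refine ih (xs.map (Ideal.Quotient.mk _)) (by simpa using hl) ?_ ?_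
      · rw [← Ideal.map_ofList]
        have h1 : Ideal.map (Ideal.Quotient.mk (Ideal.span {x})) (Ideal.ofList (x :: xs)) =
            Ideal.map (Ideal.Quotient.mk (Ideal.span {x})) (Ideal.ofList xs) := by
          rw [Ideal.ofList_cons, Ideal.map_sup, Ideal.map_quotient_self, bot_sup_eq]
        rw [← h1, hm]
        exact IsLocalRing.map_maximalIdeal_of_surjective _ Ideal.Quotient.mk_surjective
      · have h2 : (xs.map (Ideal.Quotient.mk (Ideal.span {x}))).map
            (algebraMap (R ⧸ Ideal.span {x}) (S ⧸ Ideal.span {φ x})) =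
            (xs.map φ).map (Ideal.Quotient.mk (Ideal.span {φ x})) := by
          simp only [List.map_map]
          exact List.map_congr_left fun r _ => (hcomp r).symm
        rw [h2]
        have he : (φ x • (⊤ : Submodule S S)) = Ideal.span {φ x} := by
          rw [← Submodule.ideal_span_singleton_smul]; simp
        refine ((AddEquiv.isWeaklyRegular_congr
          (e := (Submodule.quotEquivOfEq _ _ he).toAddEquiv) ?_).mp hreg)
        refine List.forall₂_same.mpr fun r _ z => ?_
        obtain ⟨r, rfl⟩ := Ideal.Quotient.mk_surjective r
        obtain ⟨z, rfl⟩ := Submodule.Quotient.mk_surjective _ z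
        rfl

/-- Miracle Flatness: a local homomorphism from a regular noetherian local ring to a
Cohen–Macaulay noetherian local ring with `dim S = dim R + dim (S / m_R S)` is flat. -/
theorem stmt_13 {R S : Type*} [CommRing R] [CommRing S] [IsLocalRing R] [IsLocalRing S]
    [Algebra R S] [IsLocalHom (algebraMap R S)]
    (hR : IsRegularLocalRing' R) (hS : IsCohenMacaulayLocalRing' S)
    (hdim : ringKrullDim S =
      ringKrullDim R +
        ringKrullDim (S ⧸ Ideal.map (algebraMap R S) (IsLocalRing.maximalIdeal R))) :
    Module.Flat R S := by
  obtain ⟨_, s, hs, hcard⟩ := hR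
  obtain ⟨_, rs, hrs, hreg, hlen⟩ := hS
  have hs' : Ideal.ofList s.toList = maximalIdeal R := by
    rw [← hs, Ideal.ofList]
    congr 1
    ext a
    simp
  have hloc : Ideal.map (algebraMap R S) (maximalIdeal R) ≤ maximalIdeal S :=
    ((local_hom_TFAE (algebraMap R S)).out 0 2).mp ‹_›
  refine flat_of_isWeaklyRegular _ s.toList rfl hs' ?_
  refine isWeaklyRegular_of_dim _ S ?_ rs hrs hreg.toIsWeaklyRegular ?_ ?_
  · intro r hr
    obtain ⟨a, ha, rfl⟩ := List.mem_map.mp hr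
    refine hloc (Ideal.mem_map_of_mem _ ?_)
    rw [← hs']
    exact Ideal.subset_span ha
  · rw [supportDim_self_eq_ringKrullDim]
    exact hlen.symm
  · have e : Ideal.ofList (s.toList.map (algebraMap R S)) • (⊤ : Submodule S S) =
        Ideal.map (algebraMap R S) (maximalIdeal R) := by
      rw [← Ideal.map_ofList, hs']; simp
    rw [e, supportDim_quotient_eq_ringKrullDim, supportDim_self_eq_ringKrullDim, hdim,
      List.length_map, Finset.length_toList, ← hcard, add_comm]
    exact le_rfl
end

section
/- Let A be a henselian local ring with residue field k, and let B be a smooth A-algebra. Then every k-algebra homomorphism B ⊗_A k → k lifts to an A-algebra homomorphism B → A. Equivalently, a smooth A-scheme with a k-rational point on its special fiber admits an A-point specializing to it. -/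
open scoped TensorProduct

universe u

/-- Lifting residue points of standard étale algebras along a henselian local ring. -/
theorem exists_lift_of_isStandardEtale {R C A : Type*} [CommRing R] [CommRing C] [CommRing A]
    [HenselianLocalRing A] [Algebra R C] [Algebra R A] [Algebra.IsStandardEtale R C]
    (θ : C →ₐ[R] IsLocalRing.ResidueField A) :
    ∃ ψ : C →ₐ[R] A, ∀ c : C, IsLocalRing.residue A (ψ c) = θ c := by
  obtain ⟨P⟩ := Algebra.IsStandardEtale.nonempty_standardEtalePresentation (R := R) (S := C)
  have h := P.hasMap.map θ
  have hd := StandardEtalePair.HasMap.isUnit_derivative_f P.P h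
  have H : ∀ f : Polynomial A, f.Monic → ∀ a₀ : IsLocalRing.ResidueField A,
      Polynomial.aeval a₀ f = 0 → Polynomial.aeval a₀ (Polynomial.derivative f) ≠ 0 →
      ∃ a : A, f.IsRoot a ∧ IsLocalRing.residue A a = a₀ := by
    have e := (HenselianLocalRing.TFAE A).out 0 1
    exact e.mp ‹_›
  obtain ⟨a, ha, ha'⟩ := H
    (P.f.map (algebraMap R A)) (P.monic_f.map _) (θ P.x)
    (by simpa [Polynomial.aeval_map_algebraMap] using h.1)
    (by simpa [Polynomial.derivative_map, Polynomial.aeval_map_algebraMap] using hd.ne_zero)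
  let π : A →ₐ[R] IsLocalRing.ResidueField A := IsScalarTower.toAlgHom R A _
  have hπ : ∀ x, π x = IsLocalRing.residue A x := fun x => rfl
  have hm : P.HasMap a := by
    refine ⟨by simpa [Polynomial.IsRoot, Polynomial.eval_map_algebraMap] using ha, ?_⟩
    apply isUnit_of_map_unit (IsLocalRing.residue A)
    rw [← hπ, ← Polynomial.aeval_algHom_apply, hπ, ha']
    exact h.2
  refine ⟨(P.lift a hm).comp P.equivRing.toAlgHom, ?_⟩
  have : π.comp ((P.lift a hm).comp P.equivRing.toAlgHom) = θ := by
    apply P.hom_ext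
    simp [hπ, ha']
  exact fun c => congr($this c)

/-- Over a henselian local ring `A` with residue field `k`, any `k`-point of the special
fiber of a smooth `A`-algebra `B` lifts to an `A`-point: every `k`-algebra homomorphism
`B ⊗_A k → k` lifts to an `A`-algebra homomorphism `B → A`. -/
theorem stmt_15 {A B : Type u} [CommRing A] [HenselianLocalRing A]
    [CommRing B] [Algebra A B] [Algebra.Smooth A B]
    (φ : (IsLocalRing.ResidueField A ⊗[A] B) →ₐ[IsLocalRing.ResidueField A]
      IsLocalRing.ResidueField A) :
    ∃ ψ : B →ₐ[A] A, ∀ b : B, IsLocalRing.residue A (ψ b) = φ (1 ⊗ₜ b) := by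
  let φ' : B →ₐ[A] IsLocalRing.ResidueField A :=
    (φ.restrictScalars A).comp Algebra.TensorProduct.includeRight
  have hφ' : ∀ b, φ' b = φ (1 ⊗ₜ b) := fun b => rfl
  let p : Ideal B := RingHom.ker φ'
  have hp : p.IsPrime := RingHom.ker_isPrime _
  obtain ⟨f, hf, n, _, _, _⟩ :=
    Algebra.IsSmoothAt.exists_isStandardEtale_mvPolynomial (R := A) (p := p)
  have hfu : IsUnit (φ' f) := isUnit_iff_ne_zero.mpr hf
  let θ : Localization.Away f →ₐ[A] IsLocalRing.ResidueField A :=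
    IsLocalization.Away.liftAlgHom f hfu
  have hθ : ∀ b, θ (algebraMap B _ b) = φ' b := fun b => IsLocalization.Away.lift_eq f hfu b
  choose x hx using fun i : Fin n => IsLocalRing.residue_surjective (R := A)
    (θ (algebraMap (MvPolynomial (Fin n) A) _ (MvPolynomial.X i)))
  let _ : Algebra (MvPolynomial (Fin n) A) A := (MvPolynomial.aeval x).toAlgebra
  have halg : ∀ q : MvPolynomial (Fin n) A,
      algebraMap (MvPolynomial (Fin n) A) A q = MvPolynomial.aeval x q := fun q => rfl
  have : IsScalarTower A (MvPolynomial (Fin n) A) A := .of_algebraMap_eq fun r => by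
    simp [halg]
  have key : θ.comp (IsScalarTower.toAlgHom A (MvPolynomial (Fin n) A) _) =
      (IsScalarTower.toAlgHom A A (IsLocalRing.ResidueField A)).comp (MvPolynomial.aeval x) := by
    ext i
    simpa using (hx i).symm
  let θ' : Localization.Away f →ₐ[MvPolynomial (Fin n) A] IsLocalRing.ResidueField A :=
    { θ with commutes' := fun q => congr($key q) }
  obtain ⟨ψ, hψ⟩ := exists_lift_of_isStandardEtale θ'
  refine ⟨(ψ.restrictScalars A).comp (IsScalarTower.toAlgHom A B _), fun b => ?_⟩
  rw [← hφ', ← hθ]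
  exact hψ _
end
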